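/- Let n ≥ 3 be an integer and let q ∈ ℂ with 1 - 1/(n-1) ≤ |q| ≤ 1 - 1/n. Suppose s ∈ ℕ, s ≥ 1, is such that the closed disk of radius 1/(2n) centered at μ_s := -q^{-s} is contained in {x ∈ ℂ : |x| > 8^11}. Then the partial theta function θ(q,·) has exactly one zero, counted with multiplicity (hence a simple zero), in the open disk D(μ_s, 1/(2n)). -/

import Mathlib

/-!
Write `θ = Θ* - G` with `G(q, x) = x⁻¹ θ(q, x⁻¹)`. By the Jacobi triple product, `|Θ*(q, y)|` is at
least `exp (-π² |q| / (1 - |q|)) |1 + y⁻¹|` for `y` near `-1`, and the functional equation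
`Θ*(q, y / q) = y Θ*(q, y)` carries this bound to `x = y / q^s`, near `μ_s`, with a gain of about
`|q|^(-s(s-1)/2)`. When `|μ_s| = |q|^(-s) > 8^11`, the gain outweighs the exponential, so that
`|Θ*(q, x)| ≥ c |x - μ_s|` on a disk of radius `2r`, where `|G| ≤ c r / 4`.

Rouché's theorem is replaced by a contraction: with `K(x) = Θ*(q, x) / (x - μ_s)`, which satisfies
`|K| ≥ c`, the zeros of `θ = K · (x - μ_s - G / K)` are the fixed points of `x ↦ μ_s + G / K`, whose
Lipschitz constant on the disk of radius `r` is at most `1 / 4` by the Cauchy estimate.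
-/

open Filter Topology Finset Metric
open scoped NNReal

section GaussianBinomial

/-- The Gaussian binomial coefficient `[N choose k]_q`, through the `q`-Pascal recurrence, so that
it makes sense in every semiring. -/
def gaussBinom {R : Type*} [Semiring R] (q : R) : ℕ → ℕ → R
  | _, 0 => 1
  | 0, _ + 1 => 0
  | N + 1, k + 1 => gaussBinom q N k + q ^ (k + 1) * gaussBinom q N (k + 1)

/-- The finite `q`-Pochhammer symbol `(q; q)_N`. -/
def qPochhammer {R : Type*} [CommRing R] (q : R) (N : ℕ) : R :=
  ∏ k ∈ range N, (1 - q ^ (k + 1))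

@[simp]
theorem gaussBinom_zero_right {R : Type*} [Semiring R] (q : R) (N : ℕ) : gaussBinom q N 0 = 1 := by
  cases N <;> rfl

theorem gaussBinom_eq_zero_of_lt {R : Type*} [Semiring R] (q : R) :
    ∀ {N k : ℕ}, N < k → gaussBinom q N k = 0
  | 0, _ + 1, _ => rfl
  | N + 1, k + 1, h => by
    rw [gaussBinom, gaussBinom_eq_zero_of_lt q (by omega : N < k),
      gaussBinom_eq_zero_of_lt q (by omega : N < k + 1), mul_zero, add_zero]

theorem qPochhammer_succ {R : Type*} [CommRing R] (q : R) (N : ℕ) :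
    qPochhammer q (N + 1) = qPochhammer q N * (1 - q ^ (N + 1)) :=
  prod_range_succ _ N

theorem gaussBinom_self {R : Type*} [Semiring R] (q : R) (N : ℕ) : gaussBinom q N N = 1 := by
  induction N with
  | zero => rfl
  | succ N ih => rw [gaussBinom, ih, gaussBinom_eq_zero_of_lt q N.lt_succ_self, mul_zero, add_zero]

theorem gaussBinom_mul_qPochhammer_mul_qPochhammer {R : Type*} [CommRing R] (q : R) (k d : ℕ) :
    gaussBinom q (k + d) k * qPochhammer q k * qPochhammer q d = qPochhammer q (k + d) := by
  induction k generalizing d with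
  | zero => simp [qPochhammer]
  | succ k ihk =>
    induction d with
    | zero => simp [gaussBinom_self, qPochhammer]
    | succ d ihd =>
      have hk := ihk (d + 1)
      rw [show k + 1 + d = k + d + 1 by ring] at ihd
      rw [show k + 1 + (d + 1) = k + d + 1 + 1 by ring, gaussBinom]
      rw [← add_assoc] at hk
      simp only [qPochhammer_succ] at hk ihd ⊢
      linear_combination (1 - q ^ (k + 1)) * hk + q ^ (k + 1) * (1 - q ^ (d + 1)) * ihd

theorem triangular_succ (k : ℕ) : (k + 1) * (k + 1 + 1) / 2 = k * (k + 1) / 2 + (k + 1) := by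
  simpa [mul_comm] using Nat.triangle_succ (k + 1)

theorem q_binomial_theorem {R : Type*} [CommSemiring R] (q y : R) (N : ℕ) :
    ∏ m ∈ range N, (1 + y * q ^ (m + 1)) =
      ∑ k ∈ range (N + 1), gaussBinom q N k * (q ^ (k * (k + 1) / 2) * y ^ k) := by
  induction N generalizing y with
  | zero => simp
  | succ N ih =>
    have hprod : ∏ m ∈ range (N + 1), (1 + y * q ^ (m + 1)) =
        (1 + y * q) * ∏ m ∈ range N, (1 + y * q * q ^ (m + 1)) := by
      rw [prod_range_succ', mul_comm]
      congr 1
      · ring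
      · exact prod_congr rfl fun m _ => by ring
    have hterm : ∀ k, gaussBinom q (N + 1) (k + 1) *
          (q ^ ((k + 1) * (k + 1 + 1) / 2) * y ^ (k + 1)) =
        gaussBinom q N (k + 1) * (q ^ ((k + 1) * (k + 1 + 1) / 2) * (y * q) ^ (k + 1)) +
        y * q * (gaussBinom q N k * (q ^ (k * (k + 1) / 2) * (y * q) ^ k)) := fun k => by
      rw [gaussBinom, triangular_succ]
      ring
    rw [hprod, ih, sum_range_succ' _ (N + 1), sum_congr rfl fun k _ => hterm k, sum_add_distrib,
      ← mul_sum, add_mul, one_mul, sum_range_succ' _ N,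
      sum_range_succ (fun k => gaussBinom q N (k + 1) * _) N,
      gaussBinom_eq_zero_of_lt q N.lt_succ_self]
    simp only [gaussBinom_zero_right]
    ring

end GaussianBinomial

section ThetaTerm

variable {K : Type*} [Field K]

/-- The term of index `j` in the Laurent series `Θ*(q, ·)`. -/
def thetaTerm (q x : K) (j : ℤ) : K :=
  q ^ (j * (j + 1) / 2) * x ^ j

theorem thetaTerm_natCast (q x : K) (j : ℕ) :
    thetaTerm q x j = q ^ (j * (j + 1) / 2) * x ^ j := by
  rw [thetaTerm]
  norm_cast

theorem thetaTerm_neg_add_one (q x : K) (j : ℕ) :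
    thetaTerm q x (-(j + 1)) = x⁻¹ * (q ^ (j * (j + 1) / 2) * x⁻¹ ^ j) := by
  rw [thetaTerm, show -((j : ℤ) + 1) * (-(j + 1) + 1) = j * (j + 1) by ring, zpow_neg, ← inv_zpow]
  norm_cast
  ring

theorem thetaTerm_div_add_one {q x : K} (hq : q ≠ 0) (hx : x ≠ 0) (j : ℤ) :
    thetaTerm q (x / q) (j + 1) = x * thetaTerm q x j := by
  rw [thetaTerm, thetaTerm,
    show (j + 1) * (j + 1 + 1) = j * (j + 1) + (j + 1) * 2 by ring,
    Int.add_mul_ediv_right _ _ two_ne_zero, zpow_add₀ hq, div_zpow, zpow_add_one₀ hx]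
  field_simp

theorem finite_jacobi_triple_product {q x : K} (hq : q ≠ 0) (hx : x ≠ 0)
    (A B : ℕ) :
    (∏ m ∈ range A, (1 + x * q ^ (m + 1))) * ∏ m ∈ range B, (1 + x⁻¹ * q ^ m) =
      ∑ k ∈ range (A + B + 1), gaussBinom q (A + B) k * thetaTerm q x (k - B) := by
  -- The substitution `x ↦ x / q` moves one factor from the second product to the first.
  induction B generalizing A x with
  | zero => simpa [thetaTerm_natCast] using q_binomial_theorem q x A
  | succ B ih =>
    have hshift : (∏ m ∈ range A, (1 + x * q ^ (m + 1))) * ∏ m ∈ range (B + 1), (1 + x⁻¹ * q ^ m) =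
        x⁻¹ * ((∏ m ∈ range (A + 1), (1 + x / q * q ^ (m + 1))) *
          ∏ m ∈ range B, (1 + (x / q)⁻¹ * q ^ m)) := by
      have hA : ∀ m, 1 + x / q * q ^ (m + 1 + 1) = 1 + x * q ^ (m + 1) := fun m => by
        field_simp
        ring
      have hB : ∀ m, 1 + (x / q)⁻¹ * q ^ m = 1 + x⁻¹ * q ^ (m + 1) := fun m => by
        field_simp
        ring
      rw [prod_range_succ' _ A, prod_range_succ' _ B]
      simp only [hA, hB]
      field_simp
      ring
    rw [hshift, ih (div_ne_zero hx hq), mul_sum, show A + 1 + B = A + (B + 1) by ring]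
    refine sum_congr rfl fun k _ => ?_
    have hterm := thetaTerm_div_add_one hq hx (k - (B + 1 : ℕ))
    rw [show (k : ℤ) - (B + 1 : ℕ) + 1 = k - B by push_cast; ring] at hterm
    rw [hterm]
    field_simp

end ThetaTerm

section Theta

variable {𝕜 : Type*} [NormedField 𝕜]

/-- The partial theta function `θ(q, x)`, the series being summed with `tsum`; it converges for
every `x` when `‖q‖ < 1`. -/
noncomputable def partialTheta (q x : 𝕜) : 𝕜 :=
  ∑' j : ℕ, q ^ (j * (j + 1) / 2) * x ^ j

/-- The two-sided theta function `Θ*(q, x)`, of which `θ(q, x)` is the part with `j ≥ 0`; it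
converges for `‖q‖ < 1` and `x ≠ 0`. -/
noncomputable def bilateralTheta (q x : 𝕜) : 𝕜 :=
  ∑' j : ℤ, thetaTerm q x j

theorem norm_partialTheta_le {q x : 𝕜} (hq : ‖q‖ ≤ 1) (hx : ‖x‖ < 1) :
    ‖partialTheta q x‖ ≤ (1 - ‖x‖)⁻¹ := by
  refine tsum_of_norm_bounded (hasSum_geometric_of_lt_one (norm_nonneg x) hx) fun j => ?_
  rw [norm_mul, norm_pow, norm_pow]
  exact mul_le_of_le_one_left (by positivity) (pow_le_one₀ (norm_nonneg q) hq)

theorem bilateralTheta_div {q x : 𝕜} (hq : q ≠ 0) (hx : x ≠ 0) :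
    bilateralTheta q (x / q) = x * bilateralTheta q x := by
  rw [bilateralTheta, ← (Equiv.addRight (1 : ℤ)).tsum_eq, bilateralTheta, ← tsum_mul_left]
  exact tsum_congr fun j => thetaTerm_div_add_one hq hx j

theorem bilateralTheta_div_pow {q y : 𝕜} (hq : q ≠ 0) (hy : y ≠ 0) (s : ℕ) :
    bilateralTheta q (y / q ^ s) = y ^ s / q ^ (s * (s - 1) / 2) * bilateralTheta q y := by
  induction s with
  | zero => simp
  | succ s ih =>
    rw [pow_succ, ← div_div, bilateralTheta_div hq (div_ne_zero hy (pow_ne_zero s hq)), ih,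
      Nat.triangle_succ]
    field_simp
    ring

theorem summable_norm_partialTheta {q : 𝕜} (hq : ‖q‖ < 1) (x : 𝕜) :
    Summable fun j : ℕ => ‖q ^ (j * (j + 1) / 2) * x ^ j‖ := by
  have hratio : Tendsto (fun j : ℕ => ‖q‖ ^ (j + 1) * ‖x‖) atTop (𝓝 0) := by
    simpa using ((tendsto_pow_atTop_nhds_zero_of_lt_one (norm_nonneg q) hq).comp
      (tendsto_add_atTop_nat 1)).mul_const ‖x‖
  refine summable_of_ratio_norm_eventually_le one_half_lt_one ?_
  filter_upwards [hratio.eventually_le_const one_half_pos] with j hj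
  rw [norm_norm, norm_norm]
  calc ‖q ^ ((j + 1) * (j + 1 + 1) / 2) * x ^ (j + 1)‖
      = ‖q‖ ^ (j + 1) * ‖x‖ * ‖q ^ (j * (j + 1) / 2) * x ^ j‖ := by
        simp only [triangular_succ, norm_mul, norm_pow]
        ring
    _ ≤ 1 / 2 * ‖q ^ (j * (j + 1) / 2) * x ^ j‖ := by gcongr

theorem summable_norm_thetaTerm {q : 𝕜} (hq : ‖q‖ < 1) (x : 𝕜) :
    Summable fun j : ℤ => ‖thetaTerm q x j‖ := by
  refine Summable.of_nat_of_neg_add_one ?_ ?_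
  · simpa only [thetaTerm_natCast] using summable_norm_partialTheta hq x
  · simpa only [thetaTerm_neg_add_one, norm_mul ‖x⁻¹‖, norm_mul x⁻¹] using
      (summable_norm_partialTheta hq x⁻¹).mul_left ‖x⁻¹‖

theorem bilateralTheta_eq_partialTheta_add [CompleteSpace 𝕜] {q : 𝕜} (hq : ‖q‖ < 1) (x : 𝕜) :
    bilateralTheta q x = partialTheta q x + x⁻¹ * partialTheta q x⁻¹ := by
  rw [bilateralTheta, tsum_of_nat_of_neg_add_one, partialTheta, partialTheta, ← tsum_mul_left]
  · simp only [thetaTerm_natCast, thetaTerm_neg_add_one]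
  · simpa only [thetaTerm_natCast] using (summable_norm_partialTheta hq x).of_norm
  · simpa only [thetaTerm_neg_add_one] using
      (summable_norm_partialTheta hq x⁻¹).of_norm.mul_left x⁻¹

theorem bilateralTheta_neg_one [CompleteSpace 𝕜] {q : 𝕜} (hq : ‖q‖ < 1) :
    bilateralTheta q (-1) = 0 := by
  rw [bilateralTheta_eq_partialTheta_add hq, inv_neg_one]
  ring

theorem differentiable_partialTheta {q : ℂ} (hq : ‖q‖ < 1) : Differentiable ℂ (partialTheta q) := by
  intro x
  have hball : DifferentiableOn ℂ (partialTheta q) (ball 0 (‖x‖ + 1)) := by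
    refine Complex.differentiableOn_tsum_of_summable_norm
      (summable_norm_partialTheta hq ((‖x‖ + 1 : ℝ) : ℂ)) (fun j => by fun_prop) isOpen_ball ?_
    intro j w hw
    have hw' : ‖w‖ ≤ ‖((‖x‖ + 1 : ℝ) : ℂ)‖ := by
      rw [Complex.norm_of_nonneg (by positivity)]
      exact (mem_ball_zero_iff.1 hw).le
    rw [norm_mul, norm_mul, norm_pow w, norm_pow (_ : ℂ) j]
    gcongr
  exact hball.differentiableAt (isOpen_ball.mem_nhds (by simp))

theorem differentiableAt_bilateralTheta {q x : ℂ} (hq : ‖q‖ < 1) (hx : x ≠ 0) :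
    DifferentiableAt ℂ (bilateralTheta q) x := by
  rw [funext (bilateralTheta_eq_partialTheta_add hq)]
  have hθ := differentiable_partialTheta hq
  fun_prop (disch := assumption)

end Theta

section TripleProduct

variable {𝕜 : Type*} [NormedField 𝕜] {q : 𝕜}

theorem qPochhammer_ne_zero (hq : ‖q‖ < 1) (N : ℕ) : qPochhammer q N ≠ 0 := by
  refine prod_ne_zero_iff.2 fun k _ h => ?_
  have hk : ‖q ^ (k + 1)‖ < 1 := by
    rw [norm_pow]
    exact pow_lt_one₀ (norm_nonneg q) hq k.succ_ne_zero
  rw [← sub_eq_zero.1 h, norm_one] at hk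
  exact hk.false

theorem gaussBinom_eq_div (hq : ‖q‖ < 1) (k d : ℕ) :
    gaussBinom q (k + d) k = qPochhammer q (k + d) / (qPochhammer q k * qPochhammer q d) := by
  rw [eq_div_iff (mul_ne_zero (qPochhammer_ne_zero hq k) (qPochhammer_ne_zero hq d)), ← mul_assoc,
    gaussBinom_mul_qPochhammer_mul_qPochhammer]

/-- The coefficient of `thetaTerm q x j` in the partial product with `3 * M` factors of the Jacobi
triple product. -/
noncomputable def tripleProductCoeff (q : 𝕜) (M : ℕ) (j : ℤ) : 𝕜 :=
  if j ∈ Icc (-M : ℤ) M then qPochhammer q M * gaussBinom q (M + M) (j + M).toNat else 0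

theorem tripleProductCoeff_of_mem (q : 𝕜) {M : ℕ} {j : ℤ} (hj : j ∈ Icc (-M : ℤ) M) :
    tripleProductCoeff q M j = qPochhammer q M *
      gaussBinom q ((M + j).toNat + (M - j).toNat) (M + j).toNat := by
  have hM : (M + j).toNat + (M - j).toNat = M + M := by grind
  rw [tripleProductCoeff, if_pos hj, hM, add_comm j]

theorem qPochhammer_mul_sum_thetaTerm (q x : 𝕜) (M : ℕ) :
    qPochhammer q M * ∑ k ∈ range (M + M + 1), gaussBinom q (M + M) k * thetaTerm q x (k - M) =
      ∑' j, tripleProductCoeff q M j * thetaTerm q x j := by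
  have hzero : ∀ j ∉ Icc (-M : ℤ) M, tripleProductCoeff q M j * thetaTerm q x j = 0 :=
    fun j hj => by rw [tripleProductCoeff, if_neg hj, zero_mul]
  rw [tsum_eq_sum hzero, mul_sum]
  refine sum_bij' (fun k _ => (k : ℤ) - M) (fun j _ => (j + M).toNat) (by grind) (by grind)
    (by grind) (by grind) fun k hk => ?_
  have hmem : (k : ℤ) - M ∈ Icc (-M : ℤ) M := by grind
  rw [tripleProductCoeff, if_pos hmem, sub_add_cancel, Int.toNat_natCast, mul_assoc]

variable [CompleteSpace 𝕜]

theorem multipliable_one_add_mul_pow (hq : ‖q‖ < 1) (c : 𝕜) :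
    Multipliable fun m : ℕ => 1 + c * q ^ m := by
  refine multipliable_one_add_of_summable ?_
  simpa only [norm_mul, norm_pow] using
    (summable_geometric_of_lt_one (norm_nonneg q) hq).mul_left ‖c‖

theorem exists_tendsto_qPochhammer (hq : ‖q‖ < 1) :
    ∃ L ≠ 0, Tendsto (qPochhammer q) atTop (𝓝 L) := by
  have hterm : ∀ m, 1 + -q * q ^ m = 1 - q ^ (m + 1) := fun m => by ring
  refine ⟨∏' m : ℕ, (1 + -q * q ^ m), tprod_one_add_ne_zero_of_summable (fun m h => ?_) ?_, ?_⟩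
  · refine qPochhammer_ne_zero hq (m + 1) ?_
    rw [qPochhammer_succ, ← hterm, h, mul_zero]
  · simpa only [norm_mul, norm_pow] using
      (summable_geometric_of_lt_one (norm_nonneg q) hq).mul_left ‖-q‖
  · exact (multipliable_one_add_mul_pow hq (-q)).hasProd.tendsto_prod_nat.congr fun N =>
      prod_congr rfl fun m _ => hterm m

theorem exists_forall_norm_gaussBinom_le (hq : ‖q‖ < 1) :
    ∃ C, ∀ k d, ‖gaussBinom q (k + d) k‖ ≤ C := by
  obtain ⟨L, hL0, hL⟩ := exists_tendsto_qPochhammer hq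
  obtain ⟨C, hC⟩ := hL.norm.bddAbove_range
  obtain ⟨C', hC'⟩ := (hL.inv₀ hL0).norm.bddAbove_range
  have hnum : ∀ N, ‖qPochhammer q N‖ ≤ C := fun N => hC ⟨N, rfl⟩
  have hden : ∀ N, ‖(qPochhammer q N)⁻¹‖ ≤ C' := fun N => hC' ⟨N, rfl⟩
  have hC'0 : 0 ≤ C' := (norm_nonneg _).trans (hden 0)
  refine ⟨C * (C' * C'), fun k d => ?_⟩
  rw [gaussBinom_eq_div hq, div_eq_mul_inv, mul_inv, norm_mul, norm_mul]
  gcongr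
  exacts [(norm_nonneg _).trans (hnum 0), hnum _, hden k, hden d]

theorem tendsto_qPochhammer_mul_gaussBinom (hq : ‖q‖ < 1) {k d : ℕ → ℕ}
    (hk : Tendsto k atTop atTop) (hd : Tendsto d atTop atTop) :
    Tendsto (fun M => qPochhammer q M * gaussBinom q (k M + d M) (k M)) atTop (𝓝 1) := by
  obtain ⟨L, hL0, hL⟩ := exists_tendsto_qPochhammer hq
  have hkd : Tendsto (fun M => k M + d M) atTop atTop :=
    tendsto_atTop_mono (fun M => Nat.le_add_right _ _) hk
  have hlim := hL.mul ((hL.comp hkd).div ((hL.comp hk).mul (hL.comp hd)) (mul_ne_zero hL0 hL0))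
  have hone : L * (L / (L * L)) = 1 := by field_simp
  rw [hone] at hlim
  exact hlim.congr fun M => by
    simp only [Pi.div_apply, Function.comp_apply, gaussBinom_eq_div hq]

theorem exists_forall_norm_tripleProductCoeff_le (hq : ‖q‖ < 1) :
    ∃ C, ∀ M j, ‖tripleProductCoeff q M j‖ ≤ C := by
  obtain ⟨L, -, hL⟩ := exists_tendsto_qPochhammer hq
  obtain ⟨C, hC⟩ := hL.norm.bddAbove_range
  obtain ⟨C', hC'⟩ := exists_forall_norm_gaussBinom_le hq
  have hpoch : ∀ M, ‖qPochhammer q M‖ ≤ C := fun M => hC ⟨M, rfl⟩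
  have hC0 : 0 ≤ C := (norm_nonneg _).trans (hpoch 0)
  have hC'0 : 0 ≤ C' := (norm_nonneg _).trans (hC' 0 0)
  refine ⟨C * C', fun M j => ?_⟩
  by_cases hj : j ∈ Icc (-M : ℤ) M
  · rw [tripleProductCoeff_of_mem q hj, norm_mul]
    exact mul_le_mul (hpoch M) (hC' _ _) (norm_nonneg _) hC0
  · rw [tripleProductCoeff, if_neg hj, norm_zero]
    exact mul_nonneg hC0 hC'0

theorem tendsto_tripleProductCoeff (hq : ‖q‖ < 1) (j : ℤ) :
    Tendsto (fun M => tripleProductCoeff q M j) atTop (𝓝 1) := by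
  have hk : Tendsto (fun M : ℕ => (M + j).toNat) atTop atTop :=
    tendsto_atTop.2 fun b => (eventually_ge_atTop (b + j.natAbs)).mono fun M hM => by omega
  have hd : Tendsto (fun M : ℕ => (M - j).toNat) atTop atTop :=
    tendsto_atTop.2 fun b => (eventually_ge_atTop (b + j.natAbs)).mono fun M hM => by omega
  refine (tendsto_qPochhammer_mul_gaussBinom hq hk hd).congr' ?_
  filter_upwards [eventually_ge_atTop j.natAbs] with M hM
  exact (tripleProductCoeff_of_mem q (by grind)).symm

theorem tendsto_qPochhammer_mul_sum_thetaTerm (hq : ‖q‖ < 1) (x : 𝕜) :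
    Tendsto (fun M : ℕ => qPochhammer q M *
      ∑ k ∈ range (M + M + 1), gaussBinom q (M + M) k * thetaTerm q x (k - M))
      atTop (𝓝 (bilateralTheta q x)) := by
  obtain ⟨C, hC⟩ := exists_forall_norm_tripleProductCoeff_le hq
  simp only [qPochhammer_mul_sum_thetaTerm]
  refine tendsto_tsum_of_dominated_convergence ((summable_norm_thetaTerm hq x).mul_left C)
    (fun j => ?_) (Eventually.of_forall fun M j => ?_)
  · simpa using (tendsto_tripleProductCoeff hq j).mul_const (thetaTerm q x j)
  · rw [norm_mul]
    exact mul_le_mul_of_nonneg_right (hC M j) (norm_nonneg _)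

theorem jacobi_triple_product (hq0 : q ≠ 0) (hq : ‖q‖ < 1) {x : 𝕜} (hx : x ≠ 0) :
    HasProd (fun m : ℕ => (1 - q ^ (m + 1)) * ((1 + x * q ^ (m + 1)) * (1 + x⁻¹ * q ^ m)))
      (bilateralTheta q x) := by
  have hneg : ∀ m, 1 + -q * q ^ m = 1 - q ^ (m + 1) := fun m => by ring
  have hpow : ∀ m, 1 + x * q * q ^ m = 1 + x * q ^ (m + 1) := fun m => by ring
  have hmul : Multipliable fun m : ℕ =>
      (1 - q ^ (m + 1)) * ((1 + x * q ^ (m + 1)) * (1 + x⁻¹ * q ^ m)) := by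
    have h := (multipliable_one_add_mul_pow hq (-q)).mul
      ((multipliable_one_add_mul_pow hq (x * q)).mul (multipliable_one_add_mul_pow hq x⁻¹))
    simpa only [hneg, hpow] using h
  have hlim : Tendsto (fun M : ℕ => ∏ m ∈ range M,
      (1 - q ^ (m + 1)) * ((1 + x * q ^ (m + 1)) * (1 + x⁻¹ * q ^ m)))
      atTop (𝓝 (bilateralTheta q x)) := by
    refine (tendsto_qPochhammer_mul_sum_thetaTerm hq x).congr fun M => ?_
    rw [← finite_jacobi_triple_product hq0 hx, prod_mul_distrib, prod_mul_distrib,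
      qPochhammer]
  exact tendsto_nhds_unique hmul.hasProd.tendsto_prod_nat hlim ▸ hmul.hasProd

end TripleProduct

section LowerBound

theorem sum_range_pow_succ_le {b : ℝ} (hb : 0 ≤ b) (hb' : b < 1) (N : ℕ) :
    ∑ k ∈ range N, b ^ (k + 1) ≤ b / (1 - b) := by
  simp only [pow_succ']
  exact sum_le_hasSum _ (fun k _ => by positivity) ((hasSum_geometric_of_lt_one hb hb').mul_left b)

theorem add_one_mul_pow_div_one_sub_pow_le {a : ℝ} (ha : 0 ≤ a) (ha' : a < 1) (n : ℕ) :
    (n + 1) * (a ^ (n + 1) / (1 - a ^ (n + 1))) ≤ a / (1 - a) := by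
  have hgeom : (n + 1) * a ^ n ≤ ∑ i ∈ range (n + 1), a ^ i := by
    have h := (range (n + 1)).card_nsmul_le_sum (a ^ ·) (a ^ n) fun i hi =>
      pow_le_pow_of_le_one ha ha'.le (mem_range_succ_iff.1 hi)
    simpa using h
  rw [← mul_div_assoc, div_le_div_iff₀ (sub_pos.2 (pow_lt_one₀ ha ha' n.succ_ne_zero))
    (sub_pos.2 ha')]
  calc (n + 1) * a ^ (n + 1) * (1 - a) = a * ((1 - a) * ((n + 1) * a ^ n)) := by ring
    _ ≤ a * ((1 - a) * ∑ i ∈ range (n + 1), a ^ i) := by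
        gcongr
    _ = a * (1 - a ^ (n + 1)) := by rw [mul_neg_geom_sum]

theorem exp_le_qPochhammer {a : ℝ} (ha : 0 ≤ a) (ha' : a < 1) (N : ℕ) :
    Real.exp (-(Real.pi ^ 2 / 6 * (a / (1 - a)))) ≤ qPochhammer a N := by
  have hpow : ∀ k : ℕ, a ^ (k + 1) < 1 := fun k => pow_lt_one₀ ha ha' k.succ_ne_zero
  have hpos : ∀ k ∈ range N, 0 < 1 - a ^ (k + 1) := fun k _ => sub_pos.2 (hpow k)
  rw [qPochhammer, ← Real.le_log_iff_exp_le (prod_pos hpos),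
    Real.log_prod fun k hk => (hpos k hk).ne', neg_le, ← sum_neg_distrib]
  have hlog : HasSum (fun i : ℕ => ∑ k ∈ range N, (a ^ (k + 1)) ^ (i + 1) / ((i : ℝ) + 1))
      (∑ k ∈ range N, -Real.log (1 - a ^ (k + 1))) :=
    hasSum_sum fun k _ => Real.hasSum_pow_div_log_of_abs_lt_one <| by
      rw [abs_of_nonneg (pow_nonneg ha _)]
      exact hpow k
  have hzeta : HasSum (fun i : ℕ => 1 / ((i : ℝ) + 1) ^ 2 * (a / (1 - a)))
      (Real.pi ^ 2 / 6 * (a / (1 - a))) := by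
    have h := (hasSum_nat_add_iff' 1).2 hasSum_zeta_two
    simpa using h.mul_right (a / (1 - a))
  refine hasSum_le (fun i => ?_) hlog hzeta
  calc ∑ k ∈ range N, (a ^ (k + 1)) ^ (i + 1) / ((i : ℝ) + 1)
      = (∑ k ∈ range N, (a ^ (i + 1)) ^ (k + 1)) / (i + 1) := by
        rw [sum_div]
        exact sum_congr rfl fun k _ => by rw [pow_right_comm]
    _ ≤ a ^ (i + 1) / (1 - a ^ (i + 1)) / (i + 1) := by
        gcongr
        exact sum_range_pow_succ_le (pow_nonneg ha _) (hpow i) N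
    _ = 1 / ((i : ℝ) + 1) ^ 2 * ((i + 1) * (a ^ (i + 1) / (1 - a ^ (i + 1)))) := by field_simp
    _ ≤ 1 / ((i : ℝ) + 1) ^ 2 * (a / (1 - a)) := by
        gcongr
        exact add_one_mul_pow_div_one_sub_pow_le ha ha' i

variable {𝕜 : Type*} [NormedField 𝕜] {q : 𝕜}

theorem qPochhammer_norm_sq_le_norm_prod (hq : ‖q‖ < 1) {w : 𝕜} (hw : ‖w‖ ≤ 2 - ‖q‖) (N : ℕ) :
    qPochhammer ‖q‖ N ^ 2 ≤ ‖∏ m ∈ range N, (1 + w * q ^ (m + 1))‖ := by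
  rw [qPochhammer, ← prod_pow, norm_prod]
  refine prod_le_prod (fun m _ => sq_nonneg _) fun m _ => ?_
  have hpow : ‖q‖ ^ (m + 1) ≤ ‖q‖ := pow_le_of_le_one (norm_nonneg q) hq.le m.succ_ne_zero
  calc (1 - ‖q‖ ^ (m + 1)) ^ 2 = 1 - (2 - ‖q‖ ^ (m + 1)) * ‖q‖ ^ (m + 1) := by ring
    _ ≤ 1 - ‖w‖ * ‖q‖ ^ (m + 1) := by
        gcongr
        linarith
    _ = ‖(1 : 𝕜)‖ - ‖w * q ^ (m + 1)‖ := by rw [norm_one, norm_mul, norm_pow]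
    _ ≤ ‖1 + w * q ^ (m + 1)‖ := norm_sub_le_norm_add _ _

theorem exp_mul_norm_le_norm_bilateralTheta [CompleteSpace 𝕜] (hq0 : q ≠ 0) (hq : ‖q‖ < 1) {y : 𝕜}
    (hy0 : y ≠ 0) (hy : ‖y‖ ≤ 2 - ‖q‖) (hy' : ‖y⁻¹‖ ≤ 2 - ‖q‖) :
    Real.exp (-(Real.pi ^ 2 * (‖q‖ / (1 - ‖q‖)))) * ‖1 + y⁻¹‖ ≤ ‖bilateralTheta q y‖ := by
  set E := Real.exp (-(Real.pi ^ 2 / 6 * (‖q‖ / (1 - ‖q‖)))) with hE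
  have hE6 : Real.exp (-(Real.pi ^ 2 * (‖q‖ / (1 - ‖q‖)))) = E ^ 2 * (E ^ 2 * E ^ 2) := by
    rw [← pow_add, ← pow_add, hE, ← Real.exp_nat_mul]
    congr 1
    push_cast
    ring
  have hprod : ∀ (w : 𝕜) (N : ℕ), ‖w‖ ≤ 2 - ‖q‖ →
      E ^ 2 ≤ ‖∏ m ∈ range N, (1 + w * q ^ (m + 1))‖ := fun w N hw =>
    (pow_le_pow_left₀ (Real.exp_nonneg _) (exp_le_qPochhammer (norm_nonneg q) hq N) 2).trans
      (qPochhammer_norm_sq_le_norm_prod hq hw N)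
  refine ge_of_tendsto' ((jacobi_triple_product hq0 hq hy0).tendsto_prod_nat.comp
    (tendsto_add_atTop_nat 1)).norm fun N => ?_
  rw [Function.comp_apply, prod_mul_distrib, prod_mul_distrib,
    prod_range_succ' (fun m => 1 + y⁻¹ * q ^ m), pow_zero, mul_one,
    norm_mul, norm_mul, norm_mul, hE6, mul_assoc, mul_assoc]
  have hneg : ‖(-1 : 𝕜)‖ ≤ 2 - ‖q‖ := by
    rw [norm_neg, norm_one]
    linarith
  gcongr
  · simpa only [neg_one_mul, ← sub_eq_add_neg] using hprod (-1) (N + 1) hneg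
  · exact hprod y (N + 1) hy
  · exact hprod y⁻¹ N hy'

end LowerBound

section Perturbation

variable {𝕜 : Type*} [NontriviallyNormedField 𝕜]

/-- `f` has exactly one zero in `U`, counted with multiplicity; simplicity of the zero is expressed
by the nonvanishing of the derivative. -/
def HasUniqueSimpleZeroOn (f : 𝕜 → 𝕜) (U : Set 𝕜) : Prop :=
  ∃ z ∈ U, f z = 0 ∧ deriv f z ≠ 0 ∧ ∀ w ∈ U, f w = 0 → w = z

theorem HasUniqueSimpleZeroOn.of_eqOn_mul {f g K : 𝕜 → 𝕜} {U : Set 𝕜}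
    (hg : HasUniqueSimpleZeroOn g U) (hU : IsOpen U) (hK : DifferentiableOn 𝕜 K U)
    (hK0 : ∀ x ∈ U, K x ≠ 0) (hfg : Set.EqOn f (K * g) U) : HasUniqueSimpleZeroOn f U := by
  obtain ⟨z, hz, hgz, hgz', huniq⟩ := hg
  refine ⟨z, hz, by rw [hfg hz, Pi.mul_apply, hgz, mul_zero], ?_, fun w hw hfw => huniq w hw ?_⟩
  · have hderiv := ((hK.differentiableAt (hU.mem_nhds hz)).hasDerivAt.mul
      (differentiableAt_of_deriv_ne_zero hgz').hasDerivAt).deriv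
    rw [(hfg.eventuallyEq_of_mem (hU.mem_nhds hz)).deriv_eq, hderiv, hgz, mul_zero, zero_add]
    exact mul_ne_zero (hK0 z hz) hgz'
  · rw [hfg hw, Pi.mul_apply] at hfw
    exact (mul_eq_zero.1 hfw).resolve_left (hK0 w hw)

theorem lipschitzOnWith_ball_of_norm_le {E : Type*} [NormedAddCommGroup E] [NormedSpace ℂ E]
    {h : ℂ → E} {μ : ℂ} {r : ℝ} {κ : ℝ≥0} (hh : DifferentiableOn ℂ h (ball μ (2 * r)))
    (hbound : ∀ x ∈ ball μ (2 * r), ‖h x‖ ≤ κ * r) : LipschitzOnWith κ h (ball μ r) := by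
  have hsub : ∀ x ∈ ball μ r, closedBall x r ⊆ ball μ (2 * r) := fun x hx =>
    closedBall_subset_ball' (by linarith [mem_ball.1 hx])
  refine (convex_ball μ r).lipschitzOnWith_of_nnnorm_deriv_le (fun x hx => ?_) fun x hx => ?_
  · exact hh.differentiableAt
      (mem_of_superset (closedBall_mem_nhds x (pos_of_mem_ball hx)) (hsub x hx))
  · have hr := pos_of_mem_ball hx
    have hderiv : ‖deriv h x‖ ≤ κ * r / r :=
      Complex.norm_deriv_le_of_forall_mem_sphere_norm_le hr (hh.diffContOnCl_ball (hsub x hx))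
        fun w hw => hbound w (hsub x hx (sphere_subset_closedBall hw))
    rwa [mul_div_cancel_right₀ _ hr.ne'] at hderiv

theorem hasUniqueSimpleZeroOn_sub_sub {h : ℂ → ℂ} {μ : ℂ} {r : ℝ} (hr : 0 < r)
    (hh : DifferentiableOn ℂ h (ball μ (2 * r))) (hbound : ∀ x ∈ ball μ (2 * r), ‖h x‖ ≤ r / 4) :
    HasUniqueSimpleZeroOn (fun x => x - μ - h x) (ball μ r) := by
  have hsub : ball μ r ⊆ ball μ (2 * r) := ball_subset_ball (by linarith)
  have hhalf : closedBall μ (r / 2) ⊆ ball μ r := closedBall_subset_ball (by linarith)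
  have hlip : LipschitzOnWith (1 / 4) h (ball μ r) :=
    lipschitzOnWith_ball_of_norm_le hh fun x hx =>
      (hbound x hx).trans_eq (by rw [div_eq_inv_mul]; norm_num)
  have hlip' : LipschitzOnWith (1 / 4) (fun x => μ + h x) (ball μ r) := fun x hx y hy => by
    simpa only [edist_add_left] using hlip hx hy
  have hmaps : Set.MapsTo (fun x => μ + h x) (closedBall μ (r / 2)) (closedBall μ (r / 2)) := by
    intro x hx
    rw [mem_closedBall, dist_eq_norm, add_sub_cancel_left]
    linarith [hbound x (hsub (hhalf hx))]
  have hcontr : ContractingWith (1 / 4) (hmaps.restrict _ _ _) :=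
    ⟨by norm_num, (hlip'.mono hhalf).mapsToRestrict hmaps⟩
  obtain ⟨z, hz, hfix, -⟩ := hcontr.exists_fixedPoint' isClosed_closedBall.isComplete hmaps
    (mem_closedBall_self (by linarith)) (edist_ne_top _ _)
  have hz' : z ∈ ball μ r := hhalf hz
  have hz0 : z - μ - h z = 0 := by linear_combination -hfix.eq
  refine ⟨z, hz', hz0, fun hderiv => ?_, fun w hw hw0 => ?_⟩
  · have hdiff := hh.differentiableAt (isOpen_ball.mem_nhds (hsub hz'))
    have hone : deriv h z = 1 := by
      rw [deriv_fun_sub (by fun_prop) hdiff, deriv_sub_const, deriv_id''] at hderiv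
      exact (sub_eq_zero.1 hderiv).symm
    have hle := norm_deriv_le_of_lipschitzOn (isOpen_ball.mem_nhds hz') hlip
    rw [hone, norm_one] at hle
    norm_num at hle
  · have hwz : h w - h z = w - z := by linear_combination hz0 - hw0
    have hle := hlip.norm_sub_le hw hz'
    rw [hwz] at hle
    push_cast at hle
    exact sub_eq_zero.1 (norm_le_zero_iff.1 (by linarith))

theorem le_norm_dslope {F : 𝕜 → 𝕜} {μ : 𝕜} {c : ℝ} {U : Set 𝕜} (hU : U ∈ 𝓝 μ)
    (hF : DifferentiableAt 𝕜 F μ) (hFμ : F μ = 0) (hlow : ∀ x ∈ U, c * ‖x - μ‖ ≤ ‖F x‖)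
    {x : 𝕜} (hx : x ∈ U) : c ≤ ‖dslope F μ x‖ := by
  have hne : ∀ y ∈ U, y ≠ μ → c ≤ ‖dslope F μ y‖ := fun y hy hyμ => by
    rw [dslope_of_ne F hyμ, slope_def_field, hFμ, sub_zero, norm_div,
      le_div_iff₀ (norm_pos_iff.2 (sub_ne_zero.2 hyμ))]
    exact hlow y hy
  rcases eq_or_ne x μ with rfl | hxμ
  · have hcont : Tendsto (fun y => ‖dslope F x y‖) (𝓝[≠] x) (𝓝 ‖dslope F x x‖) :=
      (continuousAt_dslope_same.2 hF).norm.tendsto.mono_left nhdsWithin_le_nhds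
    refine ge_of_tendsto hcont ?_
    filter_upwards [nhdsWithin_le_nhds hU, self_mem_nhdsWithin] with y hy hyμ using hne y hy hyμ
  · exact hne x hx hxμ

theorem hasUniqueSimpleZeroOn_of_norm_sub_le {f F : ℂ → ℂ} {μ : ℂ} {r c : ℝ} (hr : 0 < r)
    (hc : 0 < c) (hf : DifferentiableOn ℂ f (ball μ (2 * r)))
    (hF : DifferentiableOn ℂ F (ball μ (2 * r))) (hFμ : F μ = 0)
    (hlow : ∀ x ∈ ball μ (2 * r), c * ‖x - μ‖ ≤ ‖F x‖)
    (hclose : ∀ x ∈ ball μ (2 * r), ‖F x - f x‖ ≤ c * (r / 4)) :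
    HasUniqueSimpleZeroOn f (ball μ r) := by
  have hμ : ball μ (2 * r) ∈ 𝓝 μ := ball_mem_nhds μ (by linarith)
  have hsub : ball μ r ⊆ ball μ (2 * r) := ball_subset_ball (by linarith)
  have hK : DifferentiableOn ℂ (dslope F μ) (ball μ (2 * r)) :=
    (Complex.differentiableOn_dslope hμ).2 hF
  have hFK : ∀ x, F x = (x - μ) * dslope F μ x := fun x => by
    rw [← smul_eq_mul, sub_smul_dslope, hFμ, sub_zero]
  have hKlow : ∀ x ∈ ball μ (2 * r), c ≤ ‖dslope F μ x‖ :=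
    fun x => le_norm_dslope hμ (hF.differentiableAt hμ) hFμ hlow
  have hK0 : ∀ x ∈ ball μ (2 * r), dslope F μ x ≠ 0 := fun x hx =>
    norm_pos_iff.1 (hc.trans_le (hKlow x hx))
  refine (hasUniqueSimpleZeroOn_sub_sub (h := fun x => (F x - f x) / dslope F μ x) hr
    ((hF.sub hf).div hK hK0) fun x hx => ?_).of_eqOn_mul isOpen_ball (hK.mono hsub)
    (fun x hx => hK0 x (hsub hx)) fun x hx => ?_
  · rw [norm_div, div_le_iff₀' (hc.trans_le (hKlow x hx))]
    exact (hclose x hx).trans (by gcongr; exact hKlow x hx)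
  · have hKx := hK0 x (hsub hx)
    simp only [Pi.mul_apply]
    field_simp
    linear_combination hFK x

end Perturbation

section Estimates

theorem log_mul_div_one_sub_lt {a C : ℝ} {s : ℕ} (ha : 0 < a) (ha' : a < 1) (hC : 0 < C)
    (h : C * a ^ s < 1) : Real.log C * (a / (1 - a)) < s := by
  have hlog : Real.log C + s * Real.log a < 0 := by
    rw [← Real.log_pow, ← Real.log_mul hC.ne' (pow_pos ha s).ne']
    exact Real.log_neg (by positivity) h
  rw [← mul_div_assoc, div_lt_iff₀ (sub_pos.2 ha')]
  calc Real.log C * a < -(s * Real.log a) * a := by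
        gcongr
        linarith
    _ ≤ -(s * (1 - a⁻¹)) * a := by
        gcongr
        exact Real.one_sub_inv_le_log_of_pos ha
    _ = s * (1 - a) := by
        field_simp
        ring

theorem pow_mul_pow_triangle_le_one {a C : ℝ} {s : ℕ} (ha : 0 ≤ a) (hC : 0 ≤ C)
    (h : C ^ 2 * a ^ s ≤ 1) : C ^ (s - 1) * a ^ (s * (s - 1) / 2) ≤ 1 := by
  have htri : s * (s - 1) / 2 * 2 = s * (s - 1) := Nat.div_two_mul_two_of_even s.even_mul_pred_self
  refine (pow_le_one_iff_of_nonneg (by positivity) two_ne_zero).1 ?_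
  calc (C ^ (s - 1) * a ^ (s * (s - 1) / 2)) ^ 2 = (C ^ 2 * a ^ s) ^ (s - 1) := by
        rw [mul_pow, ← pow_mul a, htri, pow_mul, mul_pow, pow_right_comm]
    _ ≤ 1 := pow_le_one₀ (by positivity) h

theorem one_half_le_of_one_sub_one_div_le {n a : ℝ} (hn : 3 ≤ n) (ha : 1 - 1 / (n - 1) ≤ a) :
    1 / 2 ≤ a := by
  have hdiv : 1 / (n - 1) ≤ 1 / 2 := one_div_le_one_div_of_le two_pos (by linarith)
  linarith

theorem one_sub_div_four_le_one_div {n a : ℝ} (hn : 2 ≤ n) (ha : 1 - 1 / (n - 1) ≤ a) :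
    (1 - a) / 4 ≤ 1 / (2 * n) := by
  have hdiv : 1 / (n - 1) ≤ 2 / n := by
    rw [div_le_div_iff₀ (by linarith) (by linarith)]
    linarith
  calc (1 - a) / 4 ≤ 2 / n / 4 := by linarith
    _ = 1 / (2 * n) := by ring

theorem one_div_two_mul_le {n a : ℝ} (ha : a ≤ 1 - 1 / n) : 1 / (2 * n) ≤ (1 - a) / 2 := by
  rw [show 1 / (2 * n) = 1 / n / 2 by ring]
  linarith

variable {a : ℝ} {s : ℕ}

theorem inv_two_pow_le_exp (ha : 0 < a) (ha' : a < 1) (h : 8 ^ 11 * a ^ s < 1) :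
    ((2 : ℝ) ^ s)⁻¹ ≤ Real.exp (-(Real.pi ^ 2 * (a / (1 - a)))) := by
  have hlog : 33 * Real.log 2 * (a / (1 - a)) < s := by
    have h := log_mul_div_one_sub_lt ha ha' (by positivity) h
    rwa [show (8 : ℝ) ^ 11 = 2 ^ 33 by norm_num, Real.log_pow] at h
  have hpi : Real.pi ^ 2 ≤ Real.log 2 * (33 * Real.log 2) := by
    nlinarith [Real.log_two_gt_d9, Real.pi_lt_d2, Real.pi_pos]
  rw [← Real.exp_log (pow_pos (zero_lt_two' ℝ) s), ← Real.exp_neg, Real.exp_le_exp, neg_le_neg_iff,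
    Real.log_pow]
  calc Real.pi ^ 2 * (a / (1 - a)) ≤ Real.log 2 * (33 * Real.log 2) * (a / (1 - a)) := by gcongr
    _ = Real.log 2 * (33 * Real.log 2 * (a / (1 - a))) := by ring
    _ ≤ Real.log 2 * s := by
        gcongr
    _ = s * Real.log 2 := mul_comm _ _

theorem one_le_mul_one_sub (ha : 0 < a) (ha' : a < 1) (hs : 2 ≤ s) (h : 8 ^ 11 * a ^ s < 1) :
    1 ≤ s * (1 - a) := by
  have hlog := log_mul_div_one_sub_lt ha ha' (by positivity) h
  have hs' : (2 : ℝ) ≤ s := by exact_mod_cast hs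
  have htwo : 2 ≤ Real.log (8 ^ 11) := by
    rw [show (8 : ℝ) ^ 11 = 2 ^ 33 by norm_num, Real.log_pow]
    push_cast
    linarith [Real.log_two_gt_d9]
  have ht : 2 * (a / (1 - a)) < s :=
    (mul_le_mul_of_nonneg_right htwo (div_nonneg ha.le (by linarith))).trans_lt hlog
  rw [← mul_div_assoc, div_lt_iff₀ (sub_pos.2 ha')] at ht
  nlinarith

theorem mul_le_two_pow (hs : 2 ≤ s) : 128 * s ≤ 2 ^ (14 * (s - 1)) := by
  induction s, hs using Nat.le_induction with
  | base => norm_num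
  | succ s hs ih =>
    calc 128 * (s + 1) ≤ 2 ^ 14 * (128 * s) := by omega
      _ ≤ 2 ^ 14 * 2 ^ (14 * (s - 1)) := Nat.mul_le_mul_left _ ih
      _ = 2 ^ (14 * (s + 1 - 1)) := by
        rw [← pow_add]
        congr 1
        omega

variable {𝕜 : Type*} [NormedField 𝕜] {q : 𝕜}

theorem one_add_norm_div_two_le {y : 𝕜} (hy : ‖y + 1‖ ≤ (1 - ‖q‖) / 2) :
    (1 + ‖q‖) / 2 ≤ ‖y‖ := by
  have htri := norm_sub_le (y + 1) y
  rw [add_sub_cancel_left, norm_one] at htri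
  linarith

theorem inv_two_pow_mul_norm_add_one_le [CompleteSpace 𝕜] (hq0 : q ≠ 0) (hq : ‖q‖ < 1)
    (h : 8 ^ 11 * ‖q‖ ^ s < 1) {y : 𝕜} (hy : ‖y + 1‖ ≤ (1 - ‖q‖) / 2) :
    (2 ^ s)⁻¹ * ‖y + 1‖ ≤ ‖y‖ * ‖bilateralTheta q y‖ := by
  have hqpos : 0 < ‖q‖ := norm_pos_iff.2 hq0
  have hylow : (1 + ‖q‖) / 2 ≤ ‖y‖ := one_add_norm_div_two_le hy
  have hy0 : y ≠ 0 := norm_pos_iff.1 (by linarith)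
  have hyup : ‖y‖ ≤ 2 - ‖q‖ := by
    have htri := norm_sub_le (y + 1) 1
    rw [add_sub_cancel_right, norm_one] at htri
    linarith
  have hyinv : ‖y⁻¹‖ ≤ 2 - ‖q‖ := by
    rw [norm_inv, inv_le_iff_one_le_mul₀ (by linarith)]
    nlinarith
  calc (2 ^ s)⁻¹ * ‖y + 1‖ = ‖y‖ * ((2 ^ s)⁻¹ * ‖1 + y⁻¹‖) := by
        rw [mul_left_comm, ← norm_mul, mul_add, mul_one, mul_inv_cancel₀ hy0]
    _ ≤ ‖y‖ * (Real.exp (-(Real.pi ^ 2 * (‖q‖ / (1 - ‖q‖)))) * ‖1 + y⁻¹‖) := by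
        gcongr
        exact inv_two_pow_le_exp hqpos hq h
    _ ≤ ‖y‖ * ‖bilateralTheta q y‖ := by
        gcongr
        exact exp_mul_norm_le_norm_bilateralTheta hq0 hq hy0 hyup hyinv

theorem mul_norm_add_one_le_norm_bilateralTheta_div_pow [CompleteSpace 𝕜] (hq0 : q ≠ 0)
    (hq : ‖q‖ < 1) (hs : s ≠ 0) (h : 8 ^ 11 * ‖q‖ ^ s < 1) {y : 𝕜} (hy : ‖y + 1‖ ≤ (1 - ‖q‖) / 2) :
    2 ^ (14 * (s - 1)) / 2 * ‖y + 1‖ ≤ ‖bilateralTheta q (y / q ^ s)‖ := by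
  obtain ⟨k, rfl⟩ := Nat.exists_eq_add_one_of_ne_zero hs
  have hhalf : 2⁻¹ ≤ ‖y‖ := by linarith [one_add_norm_div_two_le hy, norm_nonneg q]
  have hpow : (2 ^ 16) ^ k ≤ (‖q‖ ^ ((k + 1) * k / 2))⁻¹ := by
    rw [le_inv_comm₀ (by positivity) (by positivity), ← one_div, le_div_iff₀' (by positivity)]
    refine pow_mul_pow_triangle_le_one (s := k + 1) (norm_nonneg q) (by norm_num) ?_
    linarith [pow_nonneg (norm_nonneg q) (k + 1)]
  calc 2 ^ (14 * k) / 2 * ‖y + 1‖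
      = (2 ^ 16) ^ k * (2⁻¹) ^ k * ((2 ^ (k + 1))⁻¹ * ‖y + 1‖) := by
        rw [show (2 : ℝ) ^ 16 = 2 ^ 14 * 2 * 2 by norm_num, mul_pow, mul_pow, ← pow_mul, pow_succ,
          inv_pow]
        field_simp
    _ ≤ (‖q‖ ^ ((k + 1) * k / 2))⁻¹ * ‖y‖ ^ k * (‖y‖ * ‖bilateralTheta q y‖) := by
        gcongr ?_ * ?_ ^ k * ?_
        exact inv_two_pow_mul_norm_add_one_le hq0 hq h hy
    _ = ‖bilateralTheta q (y / q ^ (k + 1))‖ := by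
        rw [bilateralTheta_div_pow hq0 (norm_pos_iff.1 (by linarith)), norm_mul, norm_div, norm_pow,
          norm_pow, Nat.add_sub_cancel]
        ring

theorem norm_inv_mul_partialTheta_inv_le (hq : ‖q‖ ≤ 1) {x : 𝕜} (hx : ‖x⁻¹‖ ≤ 1 / 2) :
    ‖x⁻¹ * partialTheta q x⁻¹‖ ≤ 2 * ‖x⁻¹‖ := by
  rw [norm_mul, mul_comm]
  gcongr
  calc ‖partialTheta q x⁻¹‖ ≤ (1 - ‖x⁻¹‖)⁻¹ := norm_partialTheta_le hq (by linarith)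
    _ ≤ (1 / 2)⁻¹ := by
        gcongr
        linarith
    _ = 2 := by norm_num

end Estimates

section NearZero

variable {𝕜 : Type*} [NormedField 𝕜] {q : 𝕜} {s : ℕ} {r : ℝ}

theorem bilateralTheta_neg_zpow_neg [CompleteSpace 𝕜] (hq0 : q ≠ 0) (hq : ‖q‖ < 1) :
    bilateralTheta q (-q ^ (-(s : ℤ))) = 0 := by
  rw [show -q ^ (-(s : ℤ)) = -1 / q ^ s by rw [zpow_neg, zpow_natCast, neg_div, one_div],
    bilateralTheta_div_pow hq0 (by simp), bilateralTheta_neg_one hq, mul_zero]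

theorem lt_norm_neg_zpow_neg_iff {C : ℝ} (hq0 : q ≠ 0) :
    C < ‖-q ^ (-(s : ℤ))‖ ↔ C * ‖q‖ ^ s < 1 := by
  rw [norm_neg, zpow_neg, zpow_natCast, norm_inv, norm_pow, ← one_div,
    lt_div_iff₀ (pow_pos (norm_pos_iff.2 hq0) s)]

theorem norm_mul_pow_add_one (hq0 : q ≠ 0) (x : 𝕜) :
    ‖x * q ^ s + 1‖ = ‖q‖ ^ s * ‖x - -q ^ (-(s : ℤ))‖ := by
  rw [← norm_pow, ← norm_mul, zpow_neg, zpow_natCast, sub_neg_eq_add, mul_add,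
    mul_inv_cancel₀ (pow_ne_zero s hq0), mul_comm x]

theorem norm_mul_pow_add_one_le (hq0 : q ≠ 0) (h : 8 ^ 11 * ‖q‖ ^ s < 1)
    (hr : r ≤ (1 - ‖q‖) / 2) {x : 𝕜} (hx : x ∈ ball (-q ^ (-(s : ℤ))) (2 * r)) :
    ‖x * q ^ s + 1‖ ≤ (1 - ‖q‖) / 2 := by
  rw [norm_mul_pow_add_one hq0]
  have hpow : ‖q‖ ^ s ≤ 1 / 2 := by linarith
  calc ‖q‖ ^ s * ‖x - -q ^ (-(s : ℤ))‖ ≤ 1 / 2 * (1 - ‖q‖) := by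
        gcongr
        linarith [mem_ball_iff_norm.1 hx]
    _ = (1 - ‖q‖) / 2 := by ring

theorem norm_inv_le_two_mul_pow {x : 𝕜} (hx : ‖x * q ^ s + 1‖ ≤ (1 - ‖q‖) / 2) :
    ‖x⁻¹‖ ≤ 2 * ‖q‖ ^ s := by
  have hlow : 1 / 2 ≤ ‖x‖ * ‖q‖ ^ s := by
    rw [← norm_pow, ← norm_mul]
    linarith [one_add_norm_div_two_le hx, norm_nonneg q]
  have hx0 : 0 < ‖x‖ := (norm_nonneg x).lt_of_ne' fun h0 => by norm_num [h0] at hlow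
  rw [norm_inv, inv_le_iff_one_le_mul₀ hx0]
  linarith

theorem mul_norm_sub_le_norm_bilateralTheta [CompleteSpace 𝕜] (hq0 : q ≠ 0) (hq : ‖q‖ < 1)
    (hs : s ≠ 0) (h : 8 ^ 11 * ‖q‖ ^ s < 1) {x : 𝕜} (hx : ‖x * q ^ s + 1‖ ≤ (1 - ‖q‖) / 2) :
    2 ^ (14 * (s - 1)) / 2 * ‖q‖ ^ s * ‖x - -q ^ (-(s : ℤ))‖ ≤ ‖bilateralTheta q x‖ := by
  have hlow := mul_norm_add_one_le_norm_bilateralTheta_div_pow hq0 hq hs h hx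
  rwa [mul_div_cancel_right₀ x (pow_ne_zero s hq0), norm_mul_pow_add_one hq0, ← mul_assoc] at hlow

theorem norm_bilateralTheta_sub_partialTheta_le [CompleteSpace 𝕜] (hq : ‖q‖ < 1)
    (h : 8 ^ 11 * ‖q‖ ^ s < 1) {x : 𝕜} (hx : ‖x * q ^ s + 1‖ ≤ (1 - ‖q‖) / 2) :
    ‖bilateralTheta q x - partialTheta q x‖ ≤ 4 * ‖q‖ ^ s := by
  have hinv := norm_inv_le_two_mul_pow hx
  rw [bilateralTheta_eq_partialTheta_add hq, add_sub_cancel_left]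
  linarith [norm_inv_mul_partialTheta_inv_le hq.le (x := x) (by linarith)]

theorem thirty_two_le_two_pow_mul (hq0 : q ≠ 0) (hq : ‖q‖ < 1) (hs : 2 ≤ s)
    (h : 8 ^ 11 * ‖q‖ ^ s < 1) (hr : (1 - ‖q‖) / 4 ≤ r) : 32 ≤ 2 ^ (14 * (s - 1)) * r := by
  have hgap : 1 ≤ s * (1 - ‖q‖) := one_le_mul_one_sub (norm_pos_iff.2 hq0) hq hs h
  have hpow : (128 * s : ℝ) ≤ 2 ^ (14 * (s - 1)) := by exact_mod_cast mul_le_two_pow hs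
  calc (32 : ℝ) ≤ 32 * (s * (1 - ‖q‖)) := by linarith
    _ = 128 * s * ((1 - ‖q‖) / 4) := by ring
    _ ≤ 2 ^ (14 * (s - 1)) * r := by gcongr

theorem two_le_of_lt_norm_neg_zpow_neg (hq : 1 / 2 ≤ ‖q‖) (hμ : 2 < ‖-q ^ (-(s : ℤ))‖) :
    2 ≤ s := by
  have hq0 : q ≠ 0 := norm_pos_iff.1 (by linarith)
  rw [lt_norm_neg_zpow_neg_iff hq0] at hμ
  by_contra! hs
  interval_cases s <;> linarith

end NearZero

theorem theta_unique_simple_zero_general {q : ℂ} {s : ℕ} {r : ℝ} (hs : 2 ≤ s)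
    (hμ : (8 : ℝ) ^ 11 < ‖-q ^ (-(s : ℤ))‖) (hr : (1 - ‖q‖) / 4 ≤ r)
    (hr' : r ≤ (1 - ‖q‖) / 2) :
    HasUniqueSimpleZeroOn (partialTheta q) (ball (-q ^ (-(s : ℤ))) r) := by
  have hs0 : s ≠ 0 := by omega
  have hq0 : q ≠ 0 := by
    rintro rfl
    rw [zero_zpow _ (by omega)] at hμ
    norm_num at hμ
  rw [lt_norm_neg_zpow_neg_iff hq0] at hμ
  have hq : ‖q‖ < 1 := (pow_lt_one_iff_of_nonneg (norm_nonneg q) hs0).1 (by linarith)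
  have hqpos : 0 < ‖q‖ := norm_pos_iff.2 hq0
  have hx := fun x => norm_mul_pow_add_one_le (x := x) hq0 hμ hr'
  refine hasUniqueSimpleZeroOn_of_norm_sub_le (F := bilateralTheta q)
    (c := 2 ^ (14 * (s - 1)) / 2 * ‖q‖ ^ s) (by linarith) (by positivity)
    (differentiable_partialTheta hq).differentiableOn (fun x hx' => ?_)
    (bilateralTheta_neg_zpow_neg hq0 hq)
    (fun x hx' => mul_norm_sub_le_norm_bilateralTheta hq0 hq hs0 hμ (hx x hx')) fun x hx' => ?_
  · refine (differentiableAt_bilateralTheta hq fun h0 => ?_).differentiableWithinAt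
    have hone := hx x hx'
    rw [h0, zero_mul, zero_add, norm_one] at hone
    linarith
  · refine (norm_bilateralTheta_sub_partialTheta_le hq hμ (hx x hx')).trans ?_
    calc 4 * ‖q‖ ^ s = 32 * (‖q‖ ^ s / 8) := by ring
      _ ≤ 2 ^ (14 * (s - 1)) * r * (‖q‖ ^ s / 8) := by
        gcongr
        exact thirty_two_le_two_pow_mul hq0 hq hs hμ hr
      _ = 2 ^ (14 * (s - 1)) / 2 * ‖q‖ ^ s * (r / 4) := by ring

/-- If the closed disk of radius `1/(2n)` about `μ_s = -q^{-s}` lies in `{|x| > 8^11}`, then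
the partial theta function `θ(q,·)` has exactly one zero, a simple one, in the open disk
`D(μ_s, 1/(2n))`. -/
theorem theta_unique_simple_zero (n : ℕ) (hn : 3 ≤ n) (q : ℂ)
    (hq1 : 1 - 1 / ((n : ℝ) - 1) ≤ ‖q‖) (hq2 : ‖q‖ ≤ 1 - 1 / (n : ℝ))
    (s : ℕ) (hs : 1 ≤ s)
    (hsub : Metric.closedBall (-q ^ (-(s : ℤ)) : ℂ) (1 / (2 * (n : ℝ)))
      ⊆ {x : ℂ | (8 : ℝ) ^ 11 < ‖x‖}) :
    ∃ z ∈ Metric.ball (-q ^ (-(s : ℤ)) : ℂ) (1 / (2 * (n : ℝ))),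
      (∑' j : ℕ, q ^ (j * (j + 1) / 2) * z ^ j = 0) ∧
      deriv (fun x : ℂ => ∑' j : ℕ, q ^ (j * (j + 1) / 2) * x ^ j) z ≠ 0 ∧
      ∀ w ∈ Metric.ball (-q ^ (-(s : ℤ)) : ℂ) (1 / (2 * (n : ℝ))),
        (∑' j : ℕ, q ^ (j * (j + 1) / 2) * w ^ j = 0) → w = z := by
  have hn' : (3 : ℝ) ≤ n := by exact_mod_cast hn
  have hμ : (8 : ℝ) ^ 11 < ‖-q ^ (-(s : ℤ))‖ := hsub (mem_closedBall_self (by positivity))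
  have hs' : 2 ≤ s :=
    two_le_of_lt_norm_neg_zpow_neg (one_half_le_of_one_sub_one_div_le hn' hq1) (by linarith)
  exact theta_unique_simple_zero_general hs' hμ
    (one_sub_div_four_le_one_div (by linarith) hq1) (one_div_two_mul_le hq2)
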